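/- Let α > 0, Λ > 1, ε ∈ (0,1), m ∈ ℕ, K ≥ 1 and L > 0. Let x₁, …, x_K ∈ ℝ^d with clusters taken at scale Lε, with singleton set 𝓢, non-singleton clusters 𝓤 and chosen representatives u*(S), and let R : ℝ^d × ℝ^d → ℝ satisfy the standing covariance bound with parameters (α, Λ, ε); graph values are taken with respect to R(i,j) := R(x_i, x_j). Then there exists C > 0 depending only on Λ and α (in particular independent of L, ε, K, m and the points) such that for every k ∈ ℕ^𝓢, ℓ ∈ ℕ^𝓤 and every graph Γ ∈ Ω_{k,ℓ} there exists a graph Γ* ∈ Ω* with |Γ| ≤ (C L^{−α})^{(deg(Γ) − deg(Γ*))/2} · |Γ*|. -/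

import Mathlib

open MeasureTheory Filter

noncomputable section

def anorm {d : ℕ} (s : Fin d → ℝ) (x : Fin d → ℝ) : ℝ :=
  ∑ j, |x j| ^ (1 / s j)

def CovBound {d : ℕ} (s : Fin d → ℝ) (α Λ ε : ℝ)
    (R : (Fin d → ℝ) → (Fin d → ℝ) → ℝ) : Prop :=
  ∀ x y, ε ^ α / (Λ * (anorm s (x - y) + ε) ^ α) ≤ R x y ∧
    R x y ≤ Λ * ε ^ α / (anorm s (x - y) + ε) ^ α

def SameCluster {d K : ℕ} (s : Fin d → ℝ) (δ : ℝ) (x : Fin K → Fin d → ℝ) :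
    Fin K → Fin K → Prop :=
  Relation.ReflTransGen fun i j => anorm s (x i - x j) ≤ δ

/-- `i` forms a singleton cluster. -/
def IsSingletonIdx {d K : ℕ} (s : Fin d → ℝ) (δ : ℝ) (x : Fin K → Fin d → ℝ)
    (i : Fin K) : Prop :=
  ∀ j, SameCluster s δ x i j → j = i

def gdeg {K : ℕ} (G : Fin K → Fin K → ℕ) (i : Fin K) : ℕ := ∑ j, G i j

def pairs (K : ℕ) : Finset (Fin K × Fin K) :=
  Finset.univ.filter fun p => p.1 < p.2

/-- The value `|Γ| = ∏_{i<j} R(i,j)^{𝓔(i,j)}` of a graph. -/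
def gval {K : ℕ} (R : Fin K → Fin K → ℝ) (G : Fin K → Fin K → ℕ) : ℝ :=
  ∏ p ∈ pairs K, R p.1 p.2 ^ G p.1 p.2

/-- Membership in `Ω_{k,ℓ}`: singletons `s` have degree `m + k_s`, representatives of
non-singleton clusters have degree `ℓ`, all other points have degree `0`. -/
def InOmega {K : ℕ} (Sing : Fin K → Prop) (u : Fin K → Fin K) (m : ℕ)
    (k l : Fin K → ℕ) (G : Fin K → Fin K → ℕ) : Prop :=
  (∀ i, Sing i → gdeg G i = m + k i) ∧
  (∀ i, ¬ Sing i → u i = i → gdeg G i = l i) ∧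
  (∀ i, ¬ Sing i → u i ≠ i → gdeg G i = 0)

/-- Membership in `Ω*`: singletons have degree `m` or `m+1`; representatives of non-singleton
clusters have degree `≤ m+1` and, if positive, all their edges go to one single singleton;
all other points have degree `0`. -/
def InOmegaStar {K : ℕ} (Sing : Fin K → Prop) (u : Fin K → Fin K) (m : ℕ)
    (G : Fin K → Fin K → ℕ) : Prop :=
  (∀ i, Sing i → gdeg G i = m ∨ gdeg G i = m + 1) ∧
  (∀ i, ¬ Sing i → u i = i →
    gdeg G i ≤ m + 1 ∧ (1 ≤ gdeg G i → ∃ s', Sing s' ∧ G s' i = gdeg G i)) ∧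
  (∀ i, ¬ Sing i → u i ≠ i → gdeg G i = 0)

/-! ### The anisotropic norm and the covariance bound -/

lemma anorm_nonneg {d : ℕ} (s x : Fin d → ℝ) : 0 ≤ anorm s x :=
  Finset.sum_nonneg fun _ _ => by positivity

lemma anorm_add_le {d : ℕ} {s : Fin d → ℝ} (hs : ∀ j, 1 ≤ s j) (x y : Fin d → ℝ) :
    anorm s (x + y) ≤ anorm s x + anorm s y := by
  unfold anorm
  rw [← Finset.sum_add_distrib]
  refine Finset.sum_le_sum fun j _ => ?_
  have hj := hs j
  have h0 : 0 ≤ 1 / s j := by positivity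
  have h1 : 1 / s j ≤ 1 := by rw [div_le_one (by linarith)]; exact hj
  exact (Real.rpow_le_rpow (abs_nonneg _) (abs_add_le (x j) (y j)) h0).trans
    (Real.rpow_add_le_add_rpow (abs_nonneg _) (abs_nonneg _) h0 h1)

lemma anorm_sub_comm {d : ℕ} (s x y : Fin d → ℝ) : anorm s (x - y) = anorm s (y - x) := by
  simp only [anorm, Pi.sub_apply, abs_sub_comm]

lemma anorm_sub_le {d : ℕ} {s : Fin d → ℝ} (hs : ∀ j, 1 ≤ s j) (x y z : Fin d → ℝ) :
    anorm s (x - z) ≤ anorm s (x - y) + anorm s (y - z) := by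
  have h := anorm_add_le hs (x - y) (y - z)
  rwa [sub_add_sub_cancel] at h

/-- A lower bound on the distance bounds the kernel by a power of the scale. -/
lemma kernel_le_of_scale_le {α Λ ε L t : ℝ} (hα : 0 < α) (hΛ : 1 < Λ) (hε : 0 < ε) (hL : 0 < L)
    (ht : L * ε ≤ t) : Λ * ε ^ α / (t + ε) ^ α ≤ Λ * L ^ (-α) := by
  have hLε : 0 < L * ε := by positivity
  have h1 : (L * ε) ^ α ≤ (t + ε) ^ α := Real.rpow_le_rpow hLε.le (by linarith) hα.le
  have h2 : 0 < (L * ε) ^ α := by positivity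
  calc Λ * ε ^ α / (t + ε) ^ α ≤ Λ * ε ^ α / (L * ε) ^ α := by gcongr
    _ = Λ * L ^ (-α) := by
      rw [Real.mul_rpow hL.le hε.le, Real.rpow_neg hL.le]
      have : 0 < ε ^ α := by positivity
      have : 0 < L ^ α := by positivity
      field_simp

/-- Doubling the distance changes the kernel by at most a constant factor. -/
lemma kernel_le_of_le_two_mul {α Λ ε t r : ℝ} (hα : 0 < α) (hΛ : 1 < Λ) (hε : 0 < ε)
    (ht : 0 ≤ t) (hr : 0 ≤ r) (h : r ≤ 2 * t) :
    Λ * ε ^ α / (t + ε) ^ α ≤ Λ ^ 2 * 2 ^ α * (ε ^ α / (Λ * (r + ε) ^ α)) := by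
  have h1 : (r + ε) ^ α ≤ 2 ^ α * (t + ε) ^ α := by
    rw [← Real.mul_rpow (by norm_num) (by positivity)]
    exact Real.rpow_le_rpow (by positivity) (by linarith) hα.le
  have h2 : 0 < (r + ε) ^ α := by positivity
  have h3 : 0 < (t + ε) ^ α := by positivity
  have h4 : 0 < ε ^ α := by positivity
  have h5 : Λ ^ 2 * 2 ^ α * (ε ^ α / (Λ * (r + ε) ^ α)) = Λ * ε ^ α * 2 ^ α / (r + ε) ^ α := by
    field_simp
  rw [h5, div_le_div_iff₀ h3 h2, mul_assoc (Λ * ε ^ α)]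
  gcongr

section CovBound

variable {d : ℕ} {s : Fin d → ℝ} {α Λ ε : ℝ} {R : (Fin d → ℝ) → (Fin d → ℝ) → ℝ}

/-- The covariance bound is insensitive to exchanging the arguments. -/
lemma CovBound.swap (hR : CovBound s α Λ ε R) : CovBound s α Λ ε fun x y => R y x :=
  fun x y => by rw [anorm_sub_comm]; exact hR y x

lemma CovBound.pos (hR : CovBound s α Λ ε R) (hΛ : 1 < Λ) (hε : 0 < ε) (x y : Fin d → ℝ) :
    0 < R x y := by
  have := anorm_nonneg s (x - y)
  exact lt_of_lt_of_le (by positivity) (hR x y).1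

end CovBound

/-- Three kernels obeying the upper (for the first two) and lower (for the third) covariance
bounds, at pairwise distances obeying the triangle inequality and above the scale `L * ε`. -/
lemma kernel_mul_le {α Λ ε L t₁ t₂ r p q w : ℝ} (hα : 0 < α) (hΛ : 1 < Λ) (hε : 0 < ε)
    (hL : 0 < L) (ht₁ : L * ε ≤ t₁) (ht₂ : L * ε ≤ t₂) (hr : 0 ≤ r) (h : r ≤ t₁ + t₂)
    (hp : 0 < p) (hq : 0 < q)
    (hp' : p ≤ Λ * ε ^ α / (t₁ + ε) ^ α) (hq' : q ≤ Λ * ε ^ α / (t₂ + ε) ^ α)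
    (hw : ε ^ α / (Λ * (r + ε) ^ α) ≤ w) :
    p * q ≤ Λ ^ 3 * 2 ^ α * L ^ (-α) * w := by
  have hLε : 0 < L * ε := by positivity
  have hΛ0 : 0 < Λ := by linarith
  have key : ∀ {t t' p q : ℝ}, L * ε ≤ t → L * ε ≤ t' → t' ≤ t → r ≤ t + t' → 0 < p → 0 < q →
      p ≤ Λ * ε ^ α / (t + ε) ^ α → q ≤ Λ * ε ^ α / (t' + ε) ^ α →
      p * q ≤ Λ ^ 3 * 2 ^ α * L ^ (-α) * w := by
    intro t t' p q ht ht' htt hrt hp hq hp' hq'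
    have hpw : p ≤ Λ ^ 2 * 2 ^ α * w :=
      (hp'.trans (kernel_le_of_le_two_mul hα hΛ hε (by linarith) hr (by linarith))).trans
        (by gcongr)
    have hqL := hq'.trans (kernel_le_of_scale_le hα hΛ hε hL ht')
    calc p * q ≤ (Λ ^ 2 * 2 ^ α * w) * (Λ * L ^ (-α)) :=
          mul_le_mul hpw hqL hq.le (hp.le.trans hpw)
      _ = _ := by ring
  rcases le_total t₂ t₁ with h' | h'
  · exact key ht₁ ht₂ h' h hp hq hp' hq'
  · rw [mul_comm p q]
    exact key ht₂ ht₁ h' (by linarith) hq hp hq' hp'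

/-! ### Graphs built from single edges -/

section Graph

variable {K : ℕ}

/-- The graph with a single edge between `a` and `b`. -/
def edgeGraph (a b : Fin K) (i j : Fin K) : ℕ :=
  if (i = a ∧ j = b) ∨ (i = b ∧ j = a) then 1 else 0

lemma edgeGraph_symm (a b i j : Fin K) : edgeGraph a b i j = edgeGraph a b j i := by
  unfold edgeGraph; congr 1; grind

lemma edgeGraph_self {a b : Fin K} (hab : a ≠ b) (i : Fin K) : edgeGraph a b i i = 0 := by
  unfold edgeGraph; grind

lemma gdeg_add (G H : Fin K → Fin K → ℕ) (i : Fin K) :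
    gdeg (G + H) i = gdeg G i + gdeg H i := by
  simp [gdeg, Finset.sum_add_distrib]

lemma gdeg_edgeGraph {a b : Fin K} (hab : a ≠ b) (i : Fin K) :
    gdeg (edgeGraph a b) i = (if i = a then 1 else 0) + (if i = b then 1 else 0) := by
  have h : ∀ j, edgeGraph a b i j =
      (if b = j then (if i = a then 1 else 0) else 0) +
      (if a = j then (if i = b then 1 else 0) else 0) := by
    intro j; unfold edgeGraph; grind
  simp only [gdeg, h, Finset.sum_add_distrib]
  simp

lemma sum_gdeg_edgeGraph {a b : Fin K} (hab : a ≠ b) : ∑ i, gdeg (edgeGraph a b) i = 2 := by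
  simp [gdeg_edgeGraph hab, Finset.sum_add_distrib]

lemma sum_gdeg_add (G H : Fin K → Fin K → ℕ) :
    ∑ i, gdeg (G + H) i = ∑ i, gdeg G i + ∑ i, gdeg H i := by
  simp [gdeg_add, Finset.sum_add_distrib]

lemma le_gdeg (G : Fin K → Fin K → ℕ) (i j : Fin K) : G i j ≤ gdeg G i :=
  Finset.single_le_sum (f := G i) (fun _ _ => Nat.zero_le _) (Finset.mem_univ j)

lemma gval_add (w : Fin K → Fin K → ℝ) (G H : Fin K → Fin K → ℕ) :
    gval w (G + H) = gval w G * gval w H := by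
  simp [gval, pow_add, Finset.prod_mul_distrib]

lemma gval_pos {w : Fin K → Fin K → ℝ} (hw : ∀ i j, 0 < w i j) (G : Fin K → Fin K → ℕ) :
    0 < gval w G :=
  Finset.prod_pos fun p _ => pow_pos (hw p.1 p.2) _

/-- The weight of an edge, read off from the ordered pair of its endpoints. -/
def edgeWeight (r : Fin K → Fin K → ℝ) (i j : Fin K) : ℝ := r (min i j) (max i j)

lemma gval_edgeGraph (r : Fin K → Fin K → ℝ) {a b : Fin K} (hab : a ≠ b) :
    gval r (edgeGraph a b) = edgeWeight r a b := by
  unfold gval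
  rw [Finset.prod_eq_single (min a b, max a b)]
  · have : edgeGraph a b (min a b) (max a b) = 1 := by
      unfold edgeGraph; grind
    simp [this, edgeWeight]
  · rintro ⟨i, j⟩ hp hne
    have hij : i < j := by simpa [pairs] using hp
    have : edgeGraph a b i j = 0 := by
      unfold edgeGraph
      grind
    simp [this]
  · intro h
    exact absurd (by simp [pairs]; grind) h

/-- An edge of a loopless symmetric graph can be split off. -/
lemma exists_eq_add_edgeGraph {G : Fin K → Fin K → ℕ} (hsymm : ∀ i j, G i j = G j i)
    (hself : ∀ i, G i i = 0) {a b : Fin K} (hab : 1 ≤ G a b) :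
    ∃ H : Fin K → Fin K → ℕ, (∀ i j, H i j = H j i) ∧ (∀ i, H i i = 0) ∧
      G = H + edgeGraph a b := by
  refine ⟨fun i j => G i j - edgeGraph a b i j, fun i j => ?_, fun i => ?_, ?_⟩
  · beta_reduce
    rw [hsymm i j, edgeGraph_symm]
  · simp [hself i]
  · funext i j
    have h : edgeGraph a b i j ≤ G i j := by
      unfold edgeGraph
      split_ifs with h
      · rcases h with ⟨rfl, rfl⟩ | ⟨rfl, rfl⟩
        · exact hab
        · rwa [hsymm]
      · exact Nat.zero_le _
    simp only [Pi.add_apply]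
    omega

/-- A vertex of positive degree has two distinct neighbours, or a neighbour carrying all of its
edges. -/
lemma exists_two_neighbours_or_eq_gdeg {G : Fin K → Fin K → ℕ} {b : Fin K} (hb : 1 ≤ gdeg G b) :
    (∃ a c, a ≠ c ∧ 1 ≤ G b a ∧ 1 ≤ G b c) ∨ ∃ a, G b a = gdeg G b := by
  obtain ⟨a, -, ha⟩ := Finset.exists_ne_zero_of_sum_ne_zero (Nat.one_le_iff_ne_zero.mp hb)
  by_cases h : ∃ c, a ≠ c ∧ 1 ≤ G b c
  · obtain ⟨c, hac, hc⟩ := h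
    exact Or.inl ⟨a, c, hac, Nat.one_le_iff_ne_zero.mpr ha, hc⟩
  · push Not at h
    refine Or.inr ⟨a, (Finset.sum_eq_single a (fun c _ hc => ?_) (by simp)).symm⟩
    have := h c hc.symm
    omega

/-! ### Reduction of graphs -/

/-- Symmetric loopless graphs whose singletons have degree at least `m` and which have no edges
at points that are not cluster representatives. -/
structure IsReducible (Sing : Fin K → Prop) (u : Fin K → Fin K) (m : ℕ)
    (G : Fin K → Fin K → ℕ) : Prop where
  symm : ∀ i j, G i j = G j i
  self : ∀ i, G i i = 0
  le_gdeg : ∀ i, Sing i → m ≤ gdeg G i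
  gdeg_eq_zero : ∀ i, u i ≠ i → gdeg G i = 0

variable {Sing : Fin K → Prop} {u : Fin K → Fin K} {m : ℕ} {G : Fin K → Fin K → ℕ}
  {r : Fin K → Fin K → ℝ} {B : ℝ}

lemma IsReducible.fixed_left (hG : IsReducible Sing u m G) {a b : Fin K} (h : 1 ≤ G a b) :
    u a = a := by
  by_contra hne
  have := hG.gdeg_eq_zero a hne
  have := _root_.le_gdeg G a b
  omega

lemma IsReducible.fixed_right (hG : IsReducible Sing u m G) {a b : Fin K} (h : 1 ≤ G a b) :
    u b = b :=
  hG.fixed_left (a := b) (b := a) (by rwa [hG.symm])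

lemma IsReducible.ne (hG : IsReducible Sing u m G) {a b : Fin K} (h : 1 ≤ G a b) : a ≠ b := by
  rintro rfl
  have := hG.self a
  omega

/-- Remove one edge. -/
lemma IsReducible.exists_remove_edge (hG : IsReducible Sing u m G) (hr : ∀ i j, 0 < r i j)
    (hB : ∀ a b, a ≠ b → u a = a → u b = b → edgeWeight r a b ≤ B)
    {a b : Fin K} (hab : 1 ≤ G a b)
    (ha : Sing a → m + 1 ≤ gdeg G a) (hb : Sing b → m + 1 ≤ gdeg G b) :
    ∃ H, IsReducible Sing u m H ∧ ∑ i, gdeg G i = ∑ i, gdeg H i + 2 ∧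
      gval r G ≤ B * gval r H := by
  have hne := hG.ne hab
  have hBab := hB a b hne (hG.fixed_left hab) (hG.fixed_right hab)
  obtain ⟨H, hsymm, hself, rfl⟩ := exists_eq_add_edgeGraph hG.symm hG.self hab
  refine ⟨H, ⟨hsymm, hself, fun i hi => ?_, fun i hi => ?_⟩, ?_, ?_⟩
  · have := hG.le_gdeg i hi
    simp only [gdeg_add, gdeg_edgeGraph hne] at *
    grind
  · have := hG.gdeg_eq_zero i hi
    rw [gdeg_add] at this
    omega
  · rw [sum_gdeg_add, sum_gdeg_edgeGraph hne]
  · rw [gval_add, gval_edgeGraph r hne, mul_comm]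
    have := gval_pos hr H
    gcongr

/-- Replace the edges `ab` and `bc` by the edge `ac`. -/
lemma IsReducible.exists_contract (hG : IsReducible Sing u m G) (hr : ∀ i j, 0 < r i j)
    (hB : ∀ a b c, a ≠ b → b ≠ c → a ≠ c → u a = a → u b = b → u c = c →
      edgeWeight r b a * edgeWeight r b c ≤ B * edgeWeight r a c)
    {a b c : Fin K} (hac : a ≠ c) (hba : 1 ≤ G b a) (hbc : 1 ≤ G b c)
    (hb : Sing b → m + 2 ≤ gdeg G b) :
    ∃ H, IsReducible Sing u m H ∧ ∑ i, gdeg G i = ∑ i, gdeg H i + 2 ∧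
      gval r G ≤ B * gval r H := by
  have hne := hG.ne hba
  have hne' := hG.ne hbc
  have ha := hG.fixed_right hba
  have hc := hG.fixed_right hbc
  have hBabc := hB a b c hne.symm hne' hac ha (hG.fixed_left hba) hc
  obtain ⟨H₁, hsymm₁, hself₁, rfl⟩ := exists_eq_add_edgeGraph hG.symm hG.self hba
  have hbc₁ : 1 ≤ H₁ b c := by
    have : edgeGraph b a b c = 0 := by unfold edgeGraph; grind
    simpa [this] using hbc
  obtain ⟨H, hsymm, hself, rfl⟩ := exists_eq_add_edgeGraph hsymm₁ hself₁ hbc₁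
  refine ⟨H + edgeGraph a c, ⟨fun i j => ?_, fun i => ?_, fun i hi => ?_, fun i hi => ?_⟩, ?_, ?_⟩
  · simp only [Pi.add_apply]
    rw [hsymm i j, edgeGraph_symm]
  · simp only [Pi.add_apply]
    rw [hself i, edgeGraph_self hac]
  · have := hG.le_gdeg i hi
    simp only [gdeg_add, gdeg_edgeGraph hne, gdeg_edgeGraph hne', gdeg_edgeGraph hac] at *
    grind
  · have := hG.gdeg_eq_zero i hi
    simp only [gdeg_add, gdeg_edgeGraph hne, gdeg_edgeGraph hne', gdeg_edgeGraph hac] at *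
    grind
  · simp only [sum_gdeg_add, sum_gdeg_edgeGraph hne, sum_gdeg_edgeGraph hne',
      sum_gdeg_edgeGraph hac]
  · simp only [gval_add, gval_edgeGraph r hne, gval_edgeGraph r hne', gval_edgeGraph r hac]
    have := gval_pos hr H
    calc gval r H * edgeWeight r b c * edgeWeight r b a
        = gval r H * (edgeWeight r b a * edgeWeight r b c) := by ring
      _ ≤ gval r H * (B * edgeWeight r a c) := by gcongr
      _ = _ := by ring

/-- A reducible graph outside `Ω*` can be replaced by one with one edge less. -/
lemma IsReducible.exists_reduce (hG : IsReducible Sing u m G) (hr : ∀ i j, 0 < r i j)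
    (hB : ∀ a b, a ≠ b → u a = a → u b = b → edgeWeight r a b ≤ B)
    (hB' : ∀ a b c, a ≠ b → b ≠ c → a ≠ c → u a = a → u b = b → u c = c →
      edgeWeight r b a * edgeWeight r b c ≤ B * edgeWeight r a c)
    (hnot : ¬ InOmegaStar Sing u m G) :
    ∃ H, IsReducible Sing u m H ∧ ∑ i, gdeg G i = ∑ i, gdeg H i + 2 ∧
      gval r G ≤ B * gval r H := by
  by_cases hS : ∃ i, Sing i ∧ m + 2 ≤ gdeg G i
  · obtain ⟨b, hb, hdeg⟩ := hS
    rcases exists_two_neighbours_or_eq_gdeg (G := G) (b := b) (by omega) with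
      ⟨a, c, hac, ha, hc⟩ | ⟨a, ha⟩
    · exact hG.exists_contract hr hB' hac ha hc fun _ => hdeg
    · refine hG.exists_remove_edge hr hB (a := b) (b := a) (by omega) (fun _ => by omega)
        fun _ => ?_
      have := _root_.le_gdeg G a b
      rw [hG.symm] at this
      omega
  push Not at hS
  by_cases hU : ∃ b, ¬ Sing b ∧ 1 ≤ gdeg G b ∧ ¬ ∃ s', Sing s' ∧ G s' b = gdeg G b
  · obtain ⟨b, hb, hdeg, hnone⟩ := hU
    rcases exists_two_neighbours_or_eq_gdeg hdeg with ⟨a, c, hac, ha, hc⟩ | ⟨a, ha⟩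
    · exact hG.exists_contract hr hB' hac ha hc fun h => absurd h hb
    · refine hG.exists_remove_edge hr hB (a := b) (b := a) (by omega) (fun h => absurd h hb)
        fun h => absurd ⟨a, h, ?_⟩ hnone
      rw [hG.symm, ha]
  push Not at hU
  refine absurd ⟨fun i hi => ?_, fun i hi _ => ⟨?_, hU i hi⟩, fun i _ => hG.gdeg_eq_zero i⟩ hnot
  · have := hG.le_gdeg i hi
    have := hS i hi
    omega
  · by_contra hlt
    obtain ⟨s', hs', he⟩ := hU i hi (by omega)
    have := hS s' hs'
    have := _root_.le_gdeg G s' i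
    omega

/-- Iterated reduction to a graph in `Ω*`. -/
lemma IsReducible.exists_inOmegaStar (hr : ∀ i j, 0 < r i j) (hB0 : 0 < B)
    (hB : ∀ a b, a ≠ b → u a = a → u b = b → edgeWeight r a b ≤ B)
    (hB' : ∀ a b c, a ≠ b → b ≠ c → a ≠ c → u a = a → u b = b → u c = c →
      edgeWeight r b a * edgeWeight r b c ≤ B * edgeWeight r a c)
    (hG : IsReducible Sing u m G) :
    ∃ H, IsReducible Sing u m H ∧ InOmegaStar Sing u m H ∧
      ∃ n : ℕ, ∑ i, gdeg G i = ∑ i, gdeg H i + 2 * n ∧ gval r G ≤ B ^ n * gval r H := by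
  induction hN : ∑ i, gdeg G i using Nat.strong_induction_on generalizing G with
  | _ N ih =>
    by_cases hstar : InOmegaStar Sing u m G
    · exact ⟨G, hG, hstar, 0, by omega, by simp⟩
    · obtain ⟨H₁, hH₁, hsum, hval⟩ := hG.exists_reduce hr hB hB' hstar
      obtain ⟨H, hH, hH', n, hn, hle⟩ := ih _ (by omega) hH₁ rfl
      refine ⟨H, hH, hH', n + 1, by omega, ?_⟩
      calc gval r G ≤ B * gval r H₁ := hval
        _ ≤ B * (B ^ n * gval r H) := by gcongr
        _ = B ^ (n + 1) * gval r H := by ring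

end Graph

/-- Proposition 2.6, reduction: every `Γ ∈ Ω_{k,ℓ}` is bounded by some
`Γ* ∈ Ω*` at cost `(C L^{−α})^{(deg Γ − deg Γ*)/2}`, with `C = C(Λ, α)` only. -/
theorem stmt8 (α Λ : ℝ) (hα : 0 < α) (hΛ : 1 < Λ) :
    ∃ C > 0, ∀ (d : ℕ), 1 ≤ d → ∀ s : Fin d → ℝ, (∀ j, 1 ≤ s j) →
      ∀ ε ∈ Set.Ioo (0:ℝ) 1, ∀ (m K : ℕ), 1 ≤ K → ∀ L : ℝ, 0 < L →
      ∀ (x : Fin K → Fin d → ℝ) (R : (Fin d → ℝ) → (Fin d → ℝ) → ℝ),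
        CovBound s α Λ ε R →
        ∀ u : Fin K → Fin K,
          (∀ i, SameCluster s (L * ε) x i (u i)) →
          (∀ i j, SameCluster s (L * ε) x i j → u i = u j) →
        ∀ (k l : Fin K → ℕ) (G : Fin K → Fin K → ℕ),
          (∀ i j, G i j = G j i) → (∀ i, G i i = 0) →
          InOmega (IsSingletonIdx s (L * ε) x) u m k l G →
          ∃ G' : Fin K → Fin K → ℕ,
            (∀ i j, G' i j = G' j i) ∧ (∀ i, G' i i = 0) ∧
            InOmegaStar (IsSingletonIdx s (L * ε) x) u m G' ∧
            gval (fun i j => R (x i) (x j)) G ≤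
              (C * L ^ (-α)) ^ ((((∑ i, gdeg G i : ℕ) : ℝ) - ((∑ i, gdeg G' i : ℕ) : ℝ)) / 2) *
                gval (fun i j => R (x i) (x j)) G' := by
  refine ⟨Λ ^ 3 * 2 ^ α, by positivity, ?_⟩
  rintro d - s hs ε ⟨hε, -⟩ m K - L hL x R hR u hu hu' k l G hsymm hself ⟨hΩ₁, -, hΩ₃⟩
  have hsing : ∀ i, IsSingletonIdx s (L * ε) x i → u i = i := fun i hi => hi _ (hu i)
  have hfar : ∀ a b, a ≠ b → u a = a → u b = b → L * ε ≤ anorm s (x a - x b) := by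
    intro a b hab ha hb
    by_contra h
    refine hab ?_
    rw [← ha, ← hb]
    exact hu' a b (Relation.ReflTransGen.single (not_le.mp h).le)
  have hr : ∀ i j, 0 < R (x i) (x j) := fun i j => hR.pos hΛ hε _ _
  have hweight : ∀ i j,
      ε ^ α / (Λ * (anorm s (x i - x j) + ε) ^ α) ≤
          edgeWeight (fun i j => R (x i) (x j)) i j ∧
        edgeWeight (fun i j => R (x i) (x j)) i j ≤
          Λ * ε ^ α / (anorm s (x i - x j) + ε) ^ α := by
    intro i j
    rcases le_total i j with h | h
    · simpa [edgeWeight, h] using hR (x i) (x j)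
    · simpa [edgeWeight, h] using hR.swap (x i) (x j)
  have hG : IsReducible (IsSingletonIdx s (L * ε) x) u m G :=
    ⟨hsymm, hself, fun i hi => by rw [hΩ₁ i hi]; omega,
      fun i hi => hΩ₃ i (fun h => hi (hsing i h)) hi⟩
  have hB0 : 0 < Λ ^ 3 * 2 ^ α * L ^ (-α) := by positivity
  have hB : ∀ a b, a ≠ b → u a = a → u b = b →
      edgeWeight (fun i j => R (x i) (x j)) a b ≤ Λ ^ 3 * 2 ^ α * L ^ (-α) := by
    intro a b hab ha hb
    refine ((hweight a b).2.trans
      (kernel_le_of_scale_le hα hΛ hε hL (hfar a b hab ha hb))).trans ?_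
    have h1 : (1 : ℝ) ≤ 2 ^ α := Real.one_le_rpow (by norm_num) hα.le
    have h2 : Λ ≤ Λ ^ 3 := le_self_pow₀ hΛ.le (by norm_num)
    gcongr
    nlinarith
  obtain ⟨G', hG', hstar, n, hn, hle⟩ := hG.exists_inOmegaStar hr hB0 hB
    fun a b c hab hbc hac ha hb hc =>
      kernel_mul_le hα hΛ hε hL (hfar b a hab.symm hb ha) (hfar b c hbc hb hc)
        (anorm_nonneg s _)
        (by rw [anorm_sub_comm s (x b) (x a)]; exact anorm_sub_le hs _ (x b) _)
        (hr _ _) (hr _ _) (hweight b a).2 (hweight b c).2 (hweight a c).1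
  refine ⟨G', hG'.symm, hG'.self, hstar, ?_⟩
  have hexp : (((∑ i, gdeg G i : ℕ) : ℝ) - ((∑ i, gdeg G' i : ℕ) : ℝ)) / 2 = n := by
    rw [hn]; push_cast; ring
  rw [hexp, Real.rpow_natCast]
  exact hle
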